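/- Soundness of rule R13 (Theorem 1, first part): Let H be a partial mixed graph and M a completion of H. Suppose A and B are adjacent in H and the mark at A on the edge A–B is a circle. Let S_A = {A} ∪ {V : V is adjacent to A in H and the edge V–A has an arrowhead at A}. If there is an uncovered possible directed path ⟨A, B, …, K⟩ in H whose second vertex is B and whose endpoint K is an ancestor of S_A in H, then in M the edge between A and B has an arrowhead at A (in particular, A → B does not hold in M). -/

import Mathlib

/-- Marks at edge ends in a partial mixed graph. -/
inductive Mark : Type
  | tail
  | arrow
  | circle
deriving DecidableEq

/-- A partial mixed graph (PMG): a symmetric irreflexive adjacency relation together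
with, for each ordered pair `(a, b)` of adjacent vertices, a mark `mark a b` at `b` on
the edge `a–b`, such that no edge has tails at both endpoints. -/
structure PMG (V : Type) where
  adj : V → V → Prop
  symm : ∀ a b, adj a b → adj b a
  irrefl : ∀ a, ¬ adj a a
  mark : V → V → Mark
  noDoubleTail : ∀ a b, adj a b → ¬ (mark a b = Mark.tail ∧ mark b a = Mark.tail)

namespace PMG

variable {V : Type}

/-- `a → b`: adjacent, tail at `a`, arrowhead at `b`. -/
def dir (G : PMG V) (a b : V) : Prop :=
  G.adj a b ∧ G.mark b a = Mark.tail ∧ G.mark a b = Mark.arrow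

/-- `a ↔ b`: adjacent, arrowheads at both endpoints. -/
def bidir (G : PMG V) (a b : V) : Prop :=
  G.adj a b ∧ G.mark b a = Mark.arrow ∧ G.mark a b = Mark.arrow

/-- `a` is an ancestor of `b`: `a = b` or there is a directed path from `a` to `b`. -/
def Anc (G : PMG V) (a b : V) : Prop :=
  Relation.ReflTransGen G.dir a b

/-- `a` is an ancestor of some vertex of the set `S`. -/
def AncSet (G : PMG V) (a : V) (S : Set V) : Prop :=
  ∃ v ∈ S, G.Anc a v

/-- A mixed graph: a PMG with no circle marks. -/
def IsMixed (G : PMG V) : Prop :=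
  ∀ a b, G.adj a b → G.mark a b ≠ Mark.circle

/-- Ancestral: no directed cycles and no almost directed cycles. -/
def Ancestral (G : PMG V) : Prop :=
  ∀ a b, G.Anc a b → a ≠ b → ¬ G.dir b a ∧ ¬ G.bidir a b

/-- Unshielded collider `(a, b, c)`: `a, c` both adjacent to `b`, `a` and `c`
distinct and nonadjacent, arrowheads at `b` on both edges. -/
def UnshieldedCollider (G : PMG V) (a b c : V) : Prop :=
  a ≠ c ∧ G.adj a b ∧ G.adj c b ∧ ¬ G.adj a c ∧
    G.mark a b = Mark.arrow ∧ G.mark c b = Mark.arrow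

/-- `M` is a completion of the PMG `H`: same vertices and adjacencies, all non-circle
marks of `H` occur identically in `M`, `M` is an ancestral mixed graph, and every
unshielded collider of `M` is already an unshielded collider of `H`. -/
def Completion (H M : PMG V) : Prop :=
  (∀ a b, M.adj a b ↔ H.adj a b) ∧
  (∀ a b, H.adj a b → H.mark a b ≠ Mark.circle → M.mark a b = H.mark a b) ∧
  M.IsMixed ∧ M.Ancestral ∧
  (∀ a b c, M.UnshieldedCollider a b c → H.UnshieldedCollider a b c)

/-- An edge usable in a possible directed path from `a` to `b`:
adjacent, no arrowhead at `a`, no tail at `b`. -/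
def possEdge (G : PMG V) (a b : V) : Prop :=
  G.adj a b ∧ G.mark b a ≠ Mark.arrow ∧ G.mark a b ≠ Mark.tail

/-- A circle edge: adjacent with circle marks at both endpoints. -/
def circleEdge (G : PMG V) (a b : V) : Prop :=
  G.adj a b ∧ G.mark a b = Mark.circle ∧ G.mark b a = Mark.circle

/-- `p 0, …, p n` is a path: distinct vertices, consecutive ones adjacent. -/
def IsPathOn (G : PMG V) (p : ℕ → V) (n : ℕ) : Prop :=
  (∀ i ≤ n, ∀ j ≤ n, p i = p j → i = j) ∧ ∀ i < n, G.adj (p i) (p (i+1))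

/-- `p 0, …, p n` is a possible directed path. -/
def IsPossDirPathOn (G : PMG V) (p : ℕ → V) (n : ℕ) : Prop :=
  (∀ i ≤ n, ∀ j ≤ n, p i = p j → i = j) ∧ ∀ i < n, G.possEdge (p i) (p (i+1))

/-- `p 0, …, p n` is a circle path. -/
def IsCirclePathOn (G : PMG V) (p : ℕ → V) (n : ℕ) : Prop :=
  (∀ i ≤ n, ∀ j ≤ n, p i = p j → i = j) ∧ ∀ i < n, G.circleEdge (p i) (p (i+1))

/-- The path `p 0, …, p n` is uncovered: any two nonconsecutive neighbours of an
internal vertex are nonadjacent. -/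
def UncoveredOn (G : PMG V) (p : ℕ → V) (n : ℕ) : Prop :=
  ∀ i, i + 2 ≤ n → ¬ G.adj (p i) (p (i+2))

/-- `F_x` relative to `V'`: the vertices of `V'` adjacent to `x` whose edge carries
a circle or an arrowhead at `x`. -/
def Fset (G : PMG V) (V' : Set V) (x : V) : Set V :=
  {v | v ∈ V' ∧ G.adj v x ∧ (G.mark v x = Mark.circle ∨ G.mark v x = Mark.arrow)}

/-- `p 0, …, p n` is an unbridged path relative to `V'` in `G`: an uncovered circle
path with at least one edge, lying in `G[−V']`, with
`F_{p 0} \ F_{p 1} ≠ ∅` and `F_{p n} \ F_{p (n-1)} ≠ ∅`. -/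
def UnbridgedOn (G : PMG V) (V' : Set V) (p : ℕ → V) (n : ℕ) : Prop :=
  1 ≤ n ∧ G.IsCirclePathOn p n ∧ G.UncoveredOn p n ∧
  (∀ i ≤ n, p i ∉ V') ∧
  (G.Fset V' (p 0) \ G.Fset V' (p 1)).Nonempty ∧
  (G.Fset V' (p n) \ G.Fset V' (p (n-1))).Nonempty

/-- The set `S_A`: `A` together with all vertices adjacent to `A` whose edge has an
arrowhead at `A`. -/
def SA (G : PMG V) (A : V) : Set V :=
  {A} ∪ {v | G.adj v A ∧ G.mark v A = Mark.arrow}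

end PMG

/-!
Suppose a completion `M` had `A → B`. Since the path is uncovered, an arrowhead of `M` entering an
internal vertex from behind cannot be met by a second one from the front: the resulting unshielded
collider would already be present in `H`, where the path has no such arrowhead. Hence `M` orients
the whole path away from `A`, so `A` and `B` are ancestors in `M` of some `v ∈ S_A`. Either `v = A`
and there is a directed cycle, or the edge `v *→ A` closes a directed or almost directed cycle.
-/

namespace PMG

variable {V : Type} {G H M : PMG V} {a b c : V}

theorem anc_of_dir_succ {p : ℕ → V} {m n : ℕ} (hmn : m ≤ n)
    (hdir : ∀ i, m ≤ i → i < n → G.dir (p i) (p (i + 1))) : G.Anc (p m) (p n) :=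
  (reflTransGen_of_succ_of_le (fun i j => G.dir (p i) (p j))
    (fun i hi => hdir i hi.1 hi.2) hmn).lift p fun _ _ h => h

theorem IsMixed.mark_eq_arrow_iff_not_dir (hG : G.IsMixed) (hab : G.adj a b) :
    G.mark b a = Mark.arrow ↔ ¬ G.dir a b := by
  refine ⟨fun harrow hdir => Mark.noConfusion (harrow.symm.trans hdir.2.1), fun hdir => ?_⟩
  by_contra hba
  have htail : G.mark b a = Mark.tail := by
    have hne_circle := hG b a (G.symm a b hab)
    cases h : G.mark b a <;> simp_all only [ne_eq, reduceCtorEq, not_true_eq_false]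
  have harrow : G.mark a b = Mark.arrow := by
    have hne_circle := hG a b hab
    have hne_tail : G.mark a b ≠ Mark.tail := fun h => G.noDoubleTail a b hab ⟨h, htail⟩
    cases h : G.mark a b <;> simp_all only [ne_eq, reduceCtorEq, not_true_eq_false]
  exact hdir ⟨hab, htail, harrow⟩

theorem IsPossDirPathOn.ne_add_two {p : ℕ → V} {n : ℕ} (hp : G.IsPossDirPathOn p n) {i : ℕ}
    (hi : i + 2 ≤ n) : p i ≠ p (i + 2) := fun h => by
  have := hp.1 i (by omega) (i + 2) hi h
  omega

theorem Ancestral.not_anc_of_mark_eq_arrow (hG : G.Ancestral) (hmix : G.IsMixed)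
    (hadj : G.adj a b) (hmark : G.mark a b = Mark.arrow) : ¬ G.Anc b a := by
  intro hanc
  have hne : b ≠ a := by
    rintro rfl
    exact G.irrefl b hadj
  obtain ⟨hdir, hbidir⟩ := hG b a hanc hne
  exact hbidir ⟨G.symm a b hadj, hmark, (hmix.mark_eq_arrow_iff_not_dir hadj).2 hdir⟩

theorem Ancestral.not_ancSet_SA_of_dir (hG : G.Ancestral) (hmix : G.IsMixed)
    (hab : G.dir a b) : ¬ G.AncSet b (G.SA a) := by
  rintro ⟨v, rfl | ⟨hva, hmark⟩, hbv⟩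
  · exact hG.not_anc_of_mark_eq_arrow hmix hab.1 hab.2.2 hbv
  · exact hG.not_anc_of_mark_eq_arrow hmix hva hmark (.head hab hbv)

namespace Completion

theorem adj_iff (hHM : Completion H M) : M.adj a b ↔ H.adj a b :=
  hHM.1 a b

theorem mark_eq (hHM : Completion H M) (hadj : H.adj a b) {m : Mark} (hm : m ≠ Mark.circle)
    (hmark : H.mark a b = m) : M.mark a b = m := by
  subst hmark
  exact hHM.2.1 a b hadj hm

theorem isMixed (hHM : Completion H M) : M.IsMixed :=
  hHM.2.2.1

theorem ancestral (hHM : Completion H M) : M.Ancestral :=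
  hHM.2.2.2.1

theorem unshieldedCollider (hHM : Completion H M) (h : M.UnshieldedCollider a b c) :
    H.UnshieldedCollider a b c :=
  hHM.2.2.2.2 a b c h

theorem dir_of_dir (hHM : Completion H M) (h : H.dir a b) : M.dir a b :=
  ⟨hHM.adj_iff.2 h.1, hHM.mark_eq (H.symm a b h.1) (by decide) h.2.1,
    hHM.mark_eq h.1 (by decide) h.2.2⟩

theorem anc_of_anc (hHM : Completion H M) (h : H.Anc a b) : M.Anc a b :=
  Relation.ReflTransGen.mono (fun _ _ => hHM.dir_of_dir) _ _ h

theorem SA_subset (hHM : Completion H M) (a : V) : H.SA a ⊆ M.SA a :=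
  Set.union_subset_union_right _ fun _ h =>
    ⟨hHM.adj_iff.2 h.1, hHM.mark_eq h.1 (by decide) h.2⟩

theorem ancSet_SA (hHM : Completion H M) : H.AncSet b (H.SA a) → M.AncSet b (M.SA a) := by
  rintro ⟨v, hv, hbv⟩
  exact ⟨v, hHM.SA_subset a hv, hHM.anc_of_anc hbv⟩

theorem dir_of_dir_of_possEdge (hHM : Completion H M) (hab : M.dir a b) (hbc : H.possEdge b c)
    (hne : a ≠ c) (hac : ¬ H.adj a c) : M.dir b c := by
  have hadj : M.adj b c := hHM.adj_iff.2 hbc.1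
  by_contra hdir
  have harrow : M.mark c b = Mark.arrow := (hHM.isMixed.mark_eq_arrow_iff_not_dir hadj).2 hdir
  have hcollider : H.UnshieldedCollider a b c := hHM.unshieldedCollider
    ⟨hne, hab.1, M.symm b c hadj, fun h => hac (hHM.adj_iff.1 h), hab.2.2, harrow⟩
  exact hbc.2.1 hcollider.2.2.2.2.2

variable {p : ℕ → V} {n : ℕ}

theorem dir_succ_of_uncoveredOn (hHM : Completion H M)
    (hstep : ∀ i < n, H.possEdge (p i) (p (i + 1)))
    (hback : ∀ i, i + 2 ≤ n → p i ≠ p (i + 2)) (hunc : H.UncoveredOn p n)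
    (hfirst : M.dir (p 0) (p 1)) : ∀ i < n, M.dir (p i) (p (i + 1)) := by
  intro i hi
  induction i with
  | zero => exact hfirst
  | succ i ih =>
    exact hHM.dir_of_dir_of_possEdge (ih (by omega)) (hstep (i + 1) hi) (hback i hi) (hunc i hi)

end Completion

end PMG

theorem R13_sound_general {V : Type} {H M : PMG V} (hHM : PMG.Completion H M)
    {p : ℕ → V} {n : ℕ} (hn : 1 ≤ n) (hstep : ∀ i < n, H.possEdge (p i) (p (i + 1)))
    (hback : ∀ i, i + 2 ≤ n → p i ≠ p (i + 2)) (hunc : H.UncoveredOn p n)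
    (hanc : H.AncSet (p n) (H.SA (p 0))) :
    M.mark (p 1) (p 0) = Mark.arrow ∧ ¬ M.dir (p 0) (p 1) := by
  have hnot_dir : ¬ M.dir (p 0) (p 1) := by
    intro hfirst
    have hdir := hHM.dir_succ_of_uncoveredOn hstep hback hunc hfirst
    have hpath : M.Anc (p 1) (p n) := PMG.anc_of_dir_succ hn fun i _ => hdir i
    obtain ⟨v, hv, hnv⟩ := hHM.ancSet_SA hanc
    exact hHM.ancestral.not_ancSet_SA_of_dir hHM.isMixed hfirst ⟨v, hv, hpath.trans hnv⟩
  have hadj : M.adj (p 0) (p 1) := hHM.adj_iff.2 (hstep 0 hn).1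
  exact ⟨(hHM.isMixed.mark_eq_arrow_iff_not_dir hadj).2 hnot_dir, hnot_dir⟩

/-- **Soundness of rule R13.** If `A ∘–* B` in the PMG `H` and there is an uncovered
possible directed path `⟨A, B, …, K⟩` in `H` with `K` an ancestor of `S_A` in `H`,
then every completion `M` of `H` has an arrowhead at `A` on the edge `A–B`
(in particular `A → B` does not hold in `M`). -/
theorem R13_sound {V : Type} (H M : PMG V) (hHM : PMG.Completion H M)
    (A B K : V) (hadj : H.adj A B) (hcirc : H.mark B A = Mark.circle)
    (p : ℕ → V) (n : ℕ) (hn : 1 ≤ n)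
    (hpath : H.IsPossDirPathOn p n) (hunc : H.UncoveredOn p n)
    (hA : p 0 = A) (hB : p 1 = B) (hK : p n = K)
    (hanc : H.AncSet K (H.SA A)) :
    M.mark B A = Mark.arrow ∧ ¬ M.dir A B := by
  subst hA hB hK
  exact R13_sound_general hHM hn hpath.2 (fun _ hi => hpath.ne_add_two hi) hunc hanc
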